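/- arXiv:1708.04456 — 3 statements merged into one kernel-verified Lean document; each statement's English description precedes it below -/
import Mathlib

section
/- Let X be a complex Hilbert space, let A be a (possibly unbounded) self-adjoint operator on X, and let (A_n) be self-adjoint operators on X with closed ranges R(A_n). Assume s-lim_{n→∞} G(A_n) = G(A) and sup_n ‖A_n†‖ < +∞ (so that R(A) is closed and A† is a bounded everywhere-defined operator). Then G(A†) ⊆ s-lim_{n→∞} G(A_n†); that is, for every y ∈ X there exist y_n ∈ X with y_n → y in norm and A_n† y_n → A† y in norm. -/
/-!
The proof works on graphs. For a self-adjoint `T` one has `N(T) = R(T)ᗮ`, so `N(T) ∩ R(T) = 0`, and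
`T† y` is the only `x ⟂ N(T)` in the domain with `y - T x ∈ N(T)` (`mp_eq`).

Fix `y`, put `x = A† y` and `z = y - A x ∈ N(A)`. Since `x ⟂ N(A)`, also `x = A w` for `w = A† x`
(`mp_mem_range`). Graph convergence lifts the three points `(x, A x)`, `(z, 0)`, `(w, x)` of `G(A)`
to points `(xₙ, pₙ)`, `(zₙ, rₙ)`, `(wₙ, vₙ)` of `G(Aₙ)`, and `yₙ = pₙ + zₙ` tends to `y`. Then:

* `Aₙ† pₙ` is the projection of `xₙ` onto `N(Aₙ)ᗮ`, and as `vₙ ∈ R(Aₙ)` is orthogonal to `N(Aₙ)`,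
  `‖xₙ - Aₙ† pₙ‖ ≤ ‖xₙ - vₙ‖ → ‖x - x‖ = 0` (`norm_sub_mp_le`);
* `Aₙ† zₙ = Aₙ† (Aₙ† rₙ)` (`mp_eq_mp_mp`), whose norm is at most `M² ‖rₙ‖ → 0`, where `M` bounds
  the norms of the `Aₙ†`.
-/


open Filter Topology
open scoped InnerProductSpace

variable {X : Type*} [NormedAddCommGroup X] [InnerProductSpace ℂ X] [CompleteSpace X]

/-- The range of a partially defined linear operator, as a set. -/
def pRange (T : X →ₗ.[ℂ] X) : Set X := {y | ∃ x : T.domain, T x = y}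

/-- The kernel of a partially defined linear operator, as a set. -/
def pKer (T : X →ₗ.[ℂ] X) : Set X := {x | ∃ h : x ∈ T.domain, T ⟨x, h⟩ = 0}

/-- `B` (defined on all of `X`) is the Moore–Penrose inverse of `T`:
for every `y`, `B y ∈ D(T) ∩ N(T)ᗮ` and `T (B y) = P_{cl R(T)} y`, the latter being
expressed by `T (B y) ∈ R(T)` together with `y - T (B y) ⟂ R(T)`.
The existence of such an everywhere-defined `B` encodes `D(T†) = X`. -/
def IsMoorePenroseInv (T : X →ₗ.[ℂ] X) (B : X → X) : Prop :=
  ∀ y : X, ∃ h : B y ∈ T.domain,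
    (∀ z ∈ pKer T, ⟪B y, z⟫_ℂ = 0) ∧
    (∀ w ∈ pRange T, ⟪y - T ⟨B y, h⟩, w⟫_ℂ = 0)

/-- `R : X → X` is the (everywhere-defined) resolvent of `T` at `l`, i.e. a right inverse
of `l • I - T`.  For a self-adjoint `T` and nonreal `l` this determines `R` uniquely. -/
def IsResolventAt (T : X →ₗ.[ℂ] X) (l : ℂ) (R : X → X) : Prop :=
  ∀ x : X, ∃ h : R x ∈ T.domain, l • R x - T ⟨R x, h⟩ = x

/-- Resolvent consistency: for every nonreal `l`, the resolvents of `Aₙ` at `l` converge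
strongly to the resolvent of `A` at `l`. -/
def ResolventConsistent (An : ℕ → X →ₗ.[ℂ] X) (A : X →ₗ.[ℂ] X) : Prop :=
  ∀ l : ℂ, l.im ≠ 0 → ∀ (R : X → X) (Rn : ℕ → X → X),
    IsResolventAt A l R → (∀ n, IsResolventAt (An n) l (Rn n)) →
    ∀ x : X, Tendsto (fun n => Rn n x) atTop (𝓝 (R x))

/-- `s-lim Sₙ`: the set of all strong (norm) limits of sequences `xₙ ∈ Sₙ`. -/
def sLim {Y : Type*} [TopologicalSpace Y] (S : ℕ → Set Y) : Set Y :=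
  {x | ∃ u : ℕ → Y, (∀ n, u n ∈ S n) ∧ Tendsto u atTop (𝓝 x)}

/-- Weak convergence of a sequence in a Hilbert space. -/
def WeakTendsto (u : ℕ → X) (x : X) : Prop :=
  ∀ z : X, Tendsto (fun n => ⟪u n, z⟫_ℂ) atTop (𝓝 ⟪x, z⟫_ℂ)

/-- `w-l̃im Sₙ`: the set of all weak limits of sequences `x_j ∈ S_{k_j}` along subsequences. -/
def wLim (S : ℕ → Set X) : Set X :=
  {x | ∃ k : ℕ → ℕ, StrictMono k ∧ ∃ u : ℕ → X, (∀ j, u j ∈ S (k j)) ∧ WeakTendsto u x}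

/-- Symmetry of a self-adjoint operator, in terms of its graph. -/
lemma graph_symm {T : X →ₗ.[ℂ] X} (hT : IsSelfAdjoint T) {a b c d : X}
    (h₁ : (a, b) ∈ T.graph) (h₂ : (c, d) ∈ T.graph) : ⟪b, c⟫_ℂ = ⟪a, d⟫_ℂ := by
  have hF := LinearPMap.adjoint_isFormalAdjoint hT.dense_domain
  rw [LinearPMap.isSelfAdjoint_def.mp hT] at hF
  rw [LinearPMap.mem_graph_iff'] at h₁ h₂
  obtain ⟨u, hu⟩ := h₁
  obtain ⟨v, hv⟩ := h₂
  obtain ⟨rfl, rfl⟩ := Prod.mk.inj hu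
  obtain ⟨rfl, rfl⟩ := Prod.mk.inj hv
  exact hF u v

lemma mem_graph_zero_of_orthogonal_range {T : X →ₗ.[ℂ] X} (hT : IsSelfAdjoint T) {z : X}
    (hz : ∀ w ∈ pRange T, ⟪z, w⟫_ℂ = 0) : (z, (0 : X)) ∈ T.graph := by
  rw [← LinearPMap.isSelfAdjoint_def.mp hT,
    LinearPMap.adjoint_graph_eq_graph_adjoint hT.dense_domain, Submodule.mem_adjoint_iff]
  intro a b hab
  obtain ⟨u, -, hu⟩ := (LinearPMap.mem_graph_iff T).mp hab
  have h := hz b ⟨u, hu⟩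
  simp [inner_eq_zero_symm.mp h]

/-- The defining properties of `T†` for self-adjoint `T`, in terms of the graph of `T`: the
condition `y - T (T† y) ⟂ R(T)` becomes `y - T (T† y) ∈ N(T)`. -/
lemma mp_spec {T : X →ₗ.[ℂ] X} (hT : IsSelfAdjoint T) {C : X → X} (hC : IsMoorePenroseInv T C)
    (y : X) : ∃ p, (C y, p) ∈ T.graph ∧ (∀ z, (z, (0 : X)) ∈ T.graph → ⟪z, C y⟫_ℂ = 0) ∧
      (y - p, (0 : X)) ∈ T.graph := by
  obtain ⟨h, hk, hr⟩ := hC y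
  refine ⟨T ⟨C y, h⟩, T.mem_graph ⟨C y, h⟩, fun z hz => ?_,
    mem_graph_zero_of_orthogonal_range hT hr⟩
  obtain ⟨u, rfl, hu⟩ := (LinearPMap.mem_graph_iff T).mp hz
  exact inner_eq_zero_symm.mp (hk _ ⟨u.2, hu⟩)

/-- `R(T) ∩ N(T) = 0` for self-adjoint `T`. -/
lemma eq_zero_of_range_of_ker {T : X →ₗ.[ℂ] X} (hT : IsSelfAdjoint T) {d q : X}
    (hd : (d, q) ∈ T.graph) (hq : (q, (0 : X)) ∈ T.graph) : q = 0 := by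
  have h := graph_symm hT hd hq
  rw [inner_zero_right] at h
  exact inner_self_eq_zero.mp h

/-- Uniqueness in the definition of `T† y`. -/
lemma mp_eq {T : X →ₗ.[ℂ] X} (hT : IsSelfAdjoint T) {C : X → X} (hC : IsMoorePenroseInv T C)
    {x y p : X} (hx : (x, p) ∈ T.graph) (hk : ∀ z, (z, (0 : X)) ∈ T.graph → ⟪z, x⟫_ℂ = 0)
    (hy : (y - p, (0 : X)) ∈ T.graph) : C y = x := by
  obtain ⟨p', h₁, h₂, h₃⟩ := mp_spec hT hC y
  have hd : (C y - x, p' - p) ∈ T.graph := T.graph.sub_mem h₁ hx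
  have hq : (p' - p, (0 : X)) ∈ T.graph := by
    simpa using T.graph.sub_mem hy h₃
  rw [eq_zero_of_range_of_ker hT hd hq] at hd
  have h : ⟪C y - x, C y - x⟫_ℂ = 0 := by
    rw [inner_sub_right, h₂ _ hd, hk _ hd, sub_zero]
  exact sub_eq_zero.mp (inner_self_eq_zero.mp h)

/-- `x - T† (T x) ∈ N(T)`. -/
lemma sub_mp_mem_ker {T : X →ₗ.[ℂ] X} (hT : IsSelfAdjoint T) {C : X → X}
    (hC : IsMoorePenroseInv T C) {x p : X} (hx : (x, p) ∈ T.graph) :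
    (x - C p, (0 : X)) ∈ T.graph := by
  obtain ⟨p', h₁, -, h₃⟩ := mp_spec hT hC p
  have hd : (x - C p, p - p') ∈ T.graph := T.graph.sub_mem hx h₁
  rwa [eq_zero_of_range_of_ker hT hd h₃] at hd

/-- `T† z = T† (T† (T z))`: the vectors `z` and `T† (T z)` differ by an element of `N(T) = N(T†)`. -/
lemma mp_eq_mp_mp {T : X →ₗ.[ℂ] X} (hT : IsSelfAdjoint T) {C : X → X}
    (hC : IsMoorePenroseInv T C) {z r : X} (hz : (z, r) ∈ T.graph) : C z = C (C r) := by
  obtain ⟨p, h₁, h₂, h₃⟩ := mp_spec hT hC (C r)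
  refine mp_eq hT hC h₁ h₂ ?_
  simpa using T.graph.add_mem (sub_mp_mem_ker hT hC hz) h₃

/-- `T† (T x)` is the projection of `x` onto `N(T)ᗮ`, hence at least as close to `x` as any
`v ∈ R(T) ⊆ N(T)ᗮ`. -/
lemma norm_sub_mp_le {T : X →ₗ.[ℂ] X} (hT : IsSelfAdjoint T) {C : X → X}
    (hC : IsMoorePenroseInv T C) {x p w v : X} (hx : (x, p) ∈ T.graph) (hw : (w, v) ∈ T.graph) :
    ‖x - C p‖ ≤ ‖x - v‖ := by
  have hk := sub_mp_mem_ker hT hC hx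
  obtain ⟨-, -, h₂, -⟩ := mp_spec hT hC p
  have hv : ⟪x - C p, v⟫_ℂ = 0 := by
    rw [← graph_symm hT hk hw, inner_zero_left]
  have h : ⟪x - C p, x - C p⟫_ℂ = ⟪x - C p, x - v⟫_ℂ := by
    rw [inner_sub_right, inner_sub_right (x - C p) x v, h₂ _ hk, hv]
  have h' : ‖x - C p‖ * ‖x - C p‖ ≤ ‖x - C p‖ * ‖x - v‖ := by
    calc ‖x - C p‖ * ‖x - C p‖ = ‖⟪x - C p, x - C p⟫_ℂ‖ := by
          rw [inner_self_eq_norm_sq_to_K, norm_pow]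
          simp [sq]
      _ ≤ ‖x - C p‖ * ‖x - v‖ := h ▸ norm_inner_le_norm _ _
  rcases (norm_nonneg (x - C p)).eq_or_lt with h0 | h0
  · rw [← h0]
    exact norm_nonneg _
  · exact le_of_mul_le_mul_left h' h0

/-- `R(T†) ⊆ R(T)` when `T†` is everywhere defined: `T† y = T (T† (T† y))`. -/
lemma mp_mem_range {T : X →ₗ.[ℂ] X} (hT : IsSelfAdjoint T) {C : X → X}
    (hC : IsMoorePenroseInv T C) (y : X) : (C (C y), C y) ∈ T.graph := by
  obtain ⟨-, -, hk, -⟩ := mp_spec hT hC y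
  obtain ⟨p, h₁, -, h₃⟩ := mp_spec hT hC (C y)
  have hp : ⟪C y - p, p⟫_ℂ = 0 := by
    rw [← graph_symm hT h₃ h₁, inner_zero_left]
  have h : ⟪C y - p, C y - p⟫_ℂ = 0 := by
    rw [inner_sub_right, hk _ h₃, hp, sub_zero]
  have hq : C y = p := sub_eq_zero.mp (inner_self_eq_zero.mp h)
  rwa [← hq] at h₁

/-- Under strong graph convergence and the uniform bound on the
Moore–Penrose inverses (so that `R(A)` is closed and `A†` is a bounded,
everywhere-defined operator `B`), one has `G(A†) ⊆ s-lim G(Aₙ†)`: for every `y ∈ X`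
there exist `yₙ → y` with `Aₙ† yₙ → A† y` in norm. -/
theorem mp_graph_inclusion_of_graph_convergence_and_uniform_bound
    (A : X →ₗ.[ℂ] X) (hA : IsSelfAdjoint A)
    (An : ℕ → X →ₗ.[ℂ] X) (hAn : ∀ n, IsSelfAdjoint (An n))
    (hRanClosed : ∀ n, IsClosed (pRange (An n)))
    (Bn : ℕ → X →L[ℂ] X) (hBn : ∀ n, IsMoorePenroseInv (An n) (Bn n))
    (hgraph : sLim (fun n => ((An n).graph : Set (X × X))) = (A.graph : Set (X × X)))
    (hbound : ∃ M : ℝ, ∀ n, ‖Bn n‖ ≤ M) :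
    ∀ B : X → X, IsMoorePenroseInv A B →
      ∀ y : X, ∃ yn : ℕ → X, Tendsto yn atTop (𝓝 y) ∧
        Tendsto (fun n => Bn n (yn n)) atTop (𝓝 (B y)) := by
  obtain ⟨M, hM⟩ := hbound
  intro B hB y
  obtain ⟨p, hp, -, hz⟩ := mp_spec hA hB y
  have lift : ∀ a b : X, (a, b) ∈ A.graph → ∃ u v : ℕ → X, (∀ n, (u n, v n) ∈ (An n).graph) ∧
      Tendsto u atTop (𝓝 a) ∧ Tendsto v atTop (𝓝 b) := by
    intro a b hab
    have hab' : (a, b) ∈ sLim (fun n => ((An n).graph : Set (X × X))) := by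
      rw [hgraph]
      exact hab
    obtain ⟨f, hf, hlim⟩ := hab'
    exact ⟨fun n => (f n).1, fun n => (f n).2, hf, hlim.fst_nhds, hlim.snd_nhds⟩
  obtain ⟨xn, pn, hxp, hxn, hpn⟩ := lift _ _ hp
  obtain ⟨zn, rn, hzr, hzn, hrn⟩ := lift _ _ hz
  obtain ⟨wn, vn, hwv, -, hvn⟩ := lift _ _ (mp_mem_range hA hB y)
  refine ⟨fun n => pn n + zn n, by simpa using hpn.add hzn, ?_⟩
  have h₁ : Tendsto (fun n => xn n - Bn n (pn n)) atTop (𝓝 0) :=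
    squeeze_zero_norm (fun n => norm_sub_mp_le (hAn n) (hBn n) (hxp n) (hwv n))
      (by simpa using (hxn.sub hvn).norm)
  have h₂ : Tendsto (fun n => Bn n (zn n)) atTop (𝓝 0) := by
    refine squeeze_zero_norm (a := fun n => M * (M * ‖rn n‖)) (fun n => ?_)
      (by simpa using (hrn.norm.const_mul M).const_mul M)
    have hM0 : 0 ≤ M := (norm_nonneg _).trans (hM n)
    rw [mp_eq_mp_mp (hAn n) (hBn n) (hzr n)]
    exact (Bn n).le_of_opNorm_le_of_le (hM n) ((Bn n).le_of_opNorm_le (hM n) (rn n))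
  simpa using (hxn.sub h₁).add h₂
end

section
/- Let X be a Hilbert space and let (X_n) be a sequence of closed subspaces of X, with P_{X_n} the orthogonal projection onto X_n. Then the sequence (P_{X_n}) converges strongly (i.e. P_{X_n} x converges in norm for every x ∈ X) if and only if s-lim_{n→∞} X_n = w-l̃im_{n→∞} X_n; and in that case the strong limit of (P_{X_n}) equals P_M, where M := s-lim_{n→∞} X_n (which is then a closed subspace of X). -/
/-!
The strong limit set `sLim Xₙ` is the set of fixed points in the limit, `{x | Pₙ x → x}`, because
`Pₙ x` is the best approximation of `x` in `Xₙ`; as the `Pₙ` are linear contractions, it is a closed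
subspace `M` (`projLimit`). It always lies in `wLim Xₙ`.

If `Pₙ x → L x` for all `x` and `u_j ∈ X_{k_j}` converges weakly to `x`, then `(u_j)` is bounded by
Banach-Steinhaus, so `⟪u_j, z⟫ = ⟪u_j, P_{k_j} z⟫` has the limit `⟪x, L z⟫ = ⟪L x, z⟫`. Hence
`L x = x` and `x ∈ M`.

If `sLim Xₙ = wLim Xₙ`, split `x = m + y` with `m ∈ M` and `y ⟂ M`. Then `Pₙ m → m`. Every
subsequence of the bounded sequence `(Pₙ y)` has a further one converging weakly
(`exists_weakTendsto_subseq`), and its limit `w` belongs to `wLim Xₙ = M`; along it,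
`‖Pₙ y‖² = ⟪Pₙ y, y⟫ → ⟪w, y⟫ = 0`. So `Pₙ y → 0` and `Pₙ x → m = P_M x`.
-/

open Filter Topology
open scoped InnerProductSpace

variable {X : Type*} [NormedAddCommGroup X] [InnerProductSpace ℂ X] [CompleteSpace X]

/-- `P` is the orthogonal projection of `X` onto the subspace `K`:
`P x ∈ K` and `x - P x ⟂ K` for every `x`. -/
def IsOrthProjOn (K : Set X) (P : X → X) : Prop :=
  ∀ x : X, P x ∈ K ∧ ∀ z ∈ K, ⟪x - P x, z⟫_ℂ = 0

/-- A weakly convergent sequence is bounded: Banach-Steinhaus applied to the functionals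
`⟪u n, ·⟫`. -/
lemma WeakTendsto.exists_norm_le {u : ℕ → X} {x : X} (h : WeakTendsto u x) :
    ∃ C : ℝ, ∀ n, ‖u n‖ ≤ C := by
  obtain ⟨C, hC⟩ := banach_steinhaus (g := fun n => innerSL ℂ (u n)) (fun z => by
    obtain ⟨C, hC⟩ := (h z).norm.bddAbove_range
    exact ⟨C, fun n => hC ⟨n, rfl⟩⟩)
  exact ⟨C, fun n => by simpa using hC n⟩

/-- Weak sequential compactness of bounded sequences. Sequential Banach-Alaoglu needs separability,
so it is applied in the closed span of the sequence, and test vectors are projected onto that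
span. -/
lemma exists_weakTendsto_subseq (u : ℕ → X) (C : ℝ) (hu : ∀ n, ‖u n‖ ≤ C) :
    ∃ (w : X) (φ : ℕ → ℕ), StrictMono φ ∧ WeakTendsto (u ∘ φ) w := by
  let K : Submodule ℂ X := (Submodule.span ℂ (Set.range u)).topologicalClosure
  have hK : IsClosed (K : Set X) := Submodule.isClosed_topologicalClosure _
  have : CompleteSpace K := hK.completeSpace_coe
  have : TopologicalSpace.SeparableSpace K := by
    have h1 : TopologicalSpace.IsSeparable (Set.range u) :=
      (Set.countable_range u).isSeparable
    have h2 : TopologicalSpace.IsSeparable (K : Set X) := by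
      rw [Submodule.topologicalClosure_coe]
      exact h1.span.closure
    exact h2.separableSpace
  have huK : ∀ n, u n ∈ K := fun n =>
    Submodule.le_topologicalClosure _ (Submodule.subset_span ⟨n, rfl⟩)
  let v : ℕ → K := fun n => ⟨u n, huK n⟩
  obtain ⟨f, -, φ, hφ, hf⟩ := WeakDual.isSeqCompact_closedBall ℂ K 0 C
    (x := fun n => StrongDual.toWeakDual (InnerProductSpace.toDual ℂ K (v n)))
    (fun n => by simpa [v] using hu n)
  refine ⟨(InnerProductSpace.toDual ℂ K).symm (WeakDual.toStrongDual f), φ, hφ, fun z => ?_⟩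
  have h := ((WeakDual.eval_continuous (𝕜 := ℂ) (K.orthogonalProjectionOnto z)).tendsto f).comp hf
  have e : f (K.orthogonalProjectionOnto z)
      = ⟪(((InnerProductSpace.toDual ℂ K).symm (WeakDual.toStrongDual f) : K) : X), z⟫_ℂ := by
    rw [← Submodule.inner_orthogonalProjectionOnto_eq_of_mem_left,
      InnerProductSpace.toDual_symm_apply]
    rfl
  rw [e] at h
  refine h.congr fun n => ?_
  exact Submodule.inner_orthogonalProjectionOnto_eq_of_mem_left (v (φ n)) z

section Projections

variable (Xn : ℕ → Submodule ℂ X) [∀ n, (Xn n).HasOrthogonalProjection]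

/-- The subspace of all `x` with `Pₙ x → x`, where `Pₙ` is the orthogonal projection onto `Xₙ`. -/
def projLimit : Submodule ℂ X where
  carrier := {x | Tendsto (fun n => (Xn n).starProjection x) atTop (𝓝 x)}
  add_mem' {a b} ha hb := by
    simpa only [Set.mem_ofPred_eq, map_add] using Tendsto.add ha hb
  zero_mem' := by simp
  smul_mem' c x hx := by
    simpa only [Set.mem_ofPred_eq, map_smul] using Tendsto.const_smul hx c

lemma mem_projLimit {x : X} :
    x ∈ projLimit Xn ↔ Tendsto (fun n => (Xn n).starProjection x) atTop (𝓝 x) := Iff.rfl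

lemma isClosed_projLimit : IsClosed (projLimit Xn : Set X) := by
  refine isClosed_of_closure_subset fun x hx => ?_
  rw [SetLike.mem_coe, mem_projLimit, Metric.tendsto_atTop]
  intro ε hε
  obtain ⟨y, hy, hxy⟩ := Metric.mem_closure_iff.1 hx (ε / 3) (by positivity)
  obtain ⟨N, hN⟩ := Metric.tendsto_atTop.1 ((mem_projLimit Xn).1 hy) (ε / 3) (by positivity)
  refine ⟨N, fun n hn => ?_⟩
  have h1 : dist ((Xn n).starProjection x) ((Xn n).starProjection y) ≤ dist x y := by
    rw [dist_eq_norm, dist_eq_norm, ← map_sub]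
    exact Submodule.norm_starProjection_apply_le _ _
  have h2 := dist_triangle4 ((Xn n).starProjection x) ((Xn n).starProjection y) y x
  have h3 := hN n hn
  rw [dist_comm y x] at h2
  linarith

/-- Strong limits of sequences from the `Xₙ` are exactly the `x` with `Pₙ x → x`, as `Pₙ x` is at
least as close to `x` as any other choice of a point of `Xₙ`. -/
lemma coe_projLimit : (projLimit Xn : Set X) = sLim (fun n => (Xn n : Set X)) := by
  ext x
  refine ⟨fun hx => ⟨_, fun n => Submodule.starProjection_apply_mem _ x, hx⟩, ?_⟩
  rintro ⟨u, hu, hux⟩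
  rw [SetLike.mem_coe, mem_projLimit, tendsto_iff_norm_sub_tendsto_zero]
  refine squeeze_zero (fun _ => norm_nonneg _) (fun n => ?_)
    (tendsto_iff_norm_sub_tendsto_zero.1 hux)
  rw [norm_sub_rev, norm_sub_rev (u n), Submodule.starProjection_minimal]
  exact ciInf_le ⟨0, by rintro _ ⟨y, rfl⟩; exact norm_nonneg _⟩ (⟨u n, hu n⟩ : Xn n)

lemma sLim_subset_wLim (S : ℕ → Set X) : sLim S ⊆ wLim S := by
  rintro x ⟨u, hu, hux⟩
  exact ⟨id, strictMono_id, u, hu, fun z => hux.inner tendsto_const_nhds⟩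

/-- If `Pₙ → L` strongly, the `Pₙ` converge to the identity at each weak limit point `x` of the `Xₙ`:
`L` is symmetric, and this forces `L x = x`. -/
lemma wLim_subset_of_tendsto (L : X → X)
    (hL : ∀ x, Tendsto (fun n => (Xn n).starProjection x) atTop (𝓝 (L x))) :
    wLim (fun n => (Xn n : Set X)) ⊆ projLimit Xn := by
  rintro x ⟨k, hk, u, hu, hux⟩
  obtain ⟨C, hC⟩ := hux.exists_norm_le
  have key : ∀ z, ⟪x, z⟫_ℂ = ⟪L x, z⟫_ℂ := by
    intro z
    have hLz : ⟪L x, z⟫_ℂ = ⟪x, L z⟫_ℂ := by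
      refine tendsto_nhds_unique ((hL x).inner tendsto_const_nhds) ?_
      refine (tendsto_const_nhds.inner (hL z)).congr fun n => ?_
      exact (Submodule.inner_starProjection_left_eq_right _ _ _).symm
    rw [hLz]
    refine tendsto_nhds_unique (hux z) ?_
    have hd : Tendsto (fun j => ⟪u j, (Xn (k j)).starProjection z - L z⟫_ℂ) atTop (𝓝 0) := by
      have h0 : Tendsto (fun j => C * ‖(Xn (k j)).starProjection z - L z‖) atTop (𝓝 0) := by
        simpa using (tendsto_iff_norm_sub_tendsto_zero.1
          ((hL z).comp hk.tendsto_atTop)).const_mul C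
      refine squeeze_zero_norm (fun j => ?_) h0
      exact (norm_inner_le_norm _ _).trans
        (mul_le_mul_of_nonneg_right (hC j) (norm_nonneg _))
    have hs := hd.add (hux (L z))
    rw [zero_add] at hs
    refine hs.congr fun j => ?_
    rw [← inner_add_right, sub_add_cancel, ← Submodule.inner_starProjection_left_eq_right,
      Submodule.starProjection_eq_self_iff.2 (hu j)]
  have hx : x = L x := ext_inner_right ℂ key
  rw [SetLike.mem_coe, mem_projLimit]
  nth_rewrite 2 [hx]
  exact hL x

/-- If all weak limit points of the `Xₙ` are orthogonal to `y`, then `Pₙ y → 0`. -/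
lemma tendsto_zero_of_orthogonal_wLim {y : X}
    (hy : ∀ w ∈ wLim (fun n => (Xn n : Set X)), ⟪w, y⟫_ℂ = 0) :
    Tendsto (fun n => (Xn n).starProjection y) atTop (𝓝 0) := by
  refine tendsto_of_subseq_tendsto fun ns hns => ?_
  obtain ⟨φ, -, hφ⟩ := strictMono_subseq_of_tendsto_atTop hns
  obtain ⟨w, ψ, hψ, hw⟩ := exists_weakTendsto_subseq
    (fun j => (Xn (ns (φ j))).starProjection y) ‖y‖
    (fun j => Submodule.norm_starProjection_apply_le _ _)
  refine ⟨φ ∘ ψ, ?_⟩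
  have hwM : w ∈ wLim (fun n => (Xn n : Set X)) :=
    ⟨_, hφ.comp hψ, _, fun j => Submodule.starProjection_apply_mem _ y, hw⟩
  have h := (hw y).norm
  rw [hy w hwM, norm_zero] at h
  have hsq : ∀ n, ‖⟪(Xn n).starProjection y, y⟫_ℂ‖ = ‖(Xn n).starProjection y‖ ^ 2 := by
    intro n
    have : ⟪(Xn n).starProjection y, y⟫_ℂ
        = ⟪(Xn n).starProjection y, (Xn n).starProjection y⟫_ℂ := by
      rw [← Submodule.inner_starProjection_left_eq_right,
        Submodule.starProjection_eq_self_iff.2 (Submodule.starProjection_apply_mem _ y)]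
    rw [this, inner_self_eq_norm_sq_to_K]
    simp
  rw [tendsto_zero_iff_norm_tendsto_zero]
  have h2 : Tendsto (fun j => ‖(Xn (ns (φ (ψ j)))).starProjection y‖ ^ 2) atTop (𝓝 0) :=
    h.congr fun j => hsq _
  have h3 := h2.sqrt
  simpa using h3

end Projections

/-- For a sequence of closed subspaces `Xₙ` with orthogonal projections
`Pₙ`: the `Pₙ` converge strongly iff `s-lim Xₙ = w-l̃im Xₙ`; and in that case
`M := s-lim Xₙ` is a closed subspace and `Pₙ → P_M` strongly. -/
theorem projections_strong_convergence_iff_sLim_eq_wLim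
    (Xn : ℕ → Submodule ℂ X) (hXn : ∀ n, IsClosed ((Xn n : Set X)))
    (Pn : ℕ → X → X) (hPn : ∀ n, IsOrthProjOn (Xn n : Set X) (Pn n)) :
    ((∀ x : X, ∃ l : X, Tendsto (fun n => Pn n x) atTop (𝓝 l)) ↔
        sLim (fun n => (Xn n : Set X)) = wLim (fun n => (Xn n : Set X))) ∧
      ((∀ x : X, ∃ l : X, Tendsto (fun n => Pn n x) atTop (𝓝 l)) →
        ∃ M : Submodule ℂ X, IsClosed (M : Set X) ∧
          (M : Set X) = sLim (fun n => (Xn n : Set X)) ∧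
          ∃ P : X → X, IsOrthProjOn (M : Set X) P ∧
            ∀ x : X, Tendsto (fun n => Pn n x) atTop (𝓝 (P x))) := by
  have : ∀ n, CompleteSpace (Xn n) := fun n => (hXn n).completeSpace_coe
  have hP : ∀ n x, Pn n x = (Xn n).starProjection x := fun n x =>
    (Submodule.eq_starProjection_of_mem_of_inner_eq_zero (hPn n x).1 (hPn n x).2).symm
  simp only [hP]
  have : CompleteSpace (projLimit Xn) := (isClosed_projLimit Xn).completeSpace_coe
  have fwd : (∀ x : X, ∃ l : X, Tendsto (fun n => (Xn n).starProjection x) atTop (𝓝 l)) →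
      sLim (fun n => (Xn n : Set X)) = wLim (fun n => (Xn n : Set X)) := by
    intro h
    choose L hL using h
    refine (sLim_subset_wLim _).antisymm ?_
    rw [← coe_projLimit]
    exact wLim_subset_of_tendsto Xn L hL
  have bwd : sLim (fun n => (Xn n : Set X)) = wLim (fun n => (Xn n : Set X)) →
      ∀ x : X, Tendsto (fun n => (Xn n).starProjection x) atTop
        (𝓝 ((projLimit Xn).starProjection x)) := by
    intro h x
    have h1 : Tendsto (fun n => (Xn n).starProjection ((projLimit Xn).starProjection x)) atTop
        (𝓝 ((projLimit Xn).starProjection x)) :=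
      Submodule.starProjection_apply_mem (projLimit Xn) x
    have h2 : Tendsto (fun n => (Xn n).starProjection (x - (projLimit Xn).starProjection x))
        atTop (𝓝 0) := by
      refine tendsto_zero_of_orthogonal_wLim Xn fun w hw => ?_
      rw [← h, ← coe_projLimit] at hw
      exact inner_eq_zero_symm.1 (Submodule.starProjection_inner_eq_zero x w hw)
    simpa only [← map_add, add_sub_cancel, add_zero] using h1.add h2
  refine ⟨⟨fwd, fun h x => ⟨_, bwd h x⟩⟩, fun h => ?_⟩
  exact ⟨projLimit Xn, isClosed_projLimit Xn, coe_projLimit Xn, (projLimit Xn).starProjection,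
    fun x => ⟨Submodule.starProjection_apply_mem _ x,
      fun z hz => Submodule.starProjection_inner_eq_zero x z hz⟩, bwd (fwd h)⟩
end

section
/- Let X be a Hilbert space, (X_n) a sequence of closed subspaces of X, and N a closed subspace of X, with P_M denoting the orthogonal projection onto a closed subspace M. The following are equivalent: (i) P_{X_n} x → P_N x in norm for every x ∈ X; (ii) P_{X_n} x ⇀ P_N x weakly for every x ∈ X; (iii) ‖P_{X_n} x‖ → ‖P_N x‖ for every x ∈ X. -/
/-!
An orthogonal projection satisfies `⟪P x, x⟫ = ‖P x‖²`. Hence weak convergence of `Pₙ x` gives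
`‖Pₙ x‖² → ‖P x‖²`, and weak convergence together with convergence of the norms gives strong
convergence by expanding `‖Pₙ x - P x‖²`. Conversely, convergence of all the norms is convergence
of the quadratic forms `⟪Pₙ x, x⟫`, which by complex polarization determine the sesquilinear forms
`⟪Pₙ x, z⟫`.
-/

open Filter Topology
open scoped InnerProductSpace

variable {X : Type*} [NormedAddCommGroup X] [InnerProductSpace ℂ X] [CompleteSpace X]

/-- `IsOrthProjOn` is stated for bare functions; linearity comes from uniqueness of the orthogonal
projection. -/
theorem IsOrthProjOn.exists_linearMap {K : Submodule ℂ X} (hK : IsClosed (K : Set X)) {P : X → X}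
    (hP : IsOrthProjOn (K : Set X) P) : ∃ T : X →ₗ[ℂ] X, P = T := by
  have : CompleteSpace K := hK.completeSpace_coe
  refine ⟨K.starProjection.toLinearMap, funext fun x => ?_⟩
  exact (Submodule.eq_starProjection_of_mem_of_inner_eq_zero (hP x).1 (hP x).2).symm

theorem IsOrthProjOn.inner_self {K : Set X} {P : X → X} (hP : IsOrthProjOn K P) (x : X) :
    ⟪P x, x⟫_ℂ = ((‖P x‖ ^ 2 : ℝ) : ℂ) := by
  have h := inner_eq_zero_symm.1 ((hP x).2 _ (hP x).1)
  rw [inner_sub_right, sub_eq_zero] at h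
  rw [h, inner_self_eq_norm_sq_to_K]
  push_cast
  rfl

theorem WeakTendsto.tendsto_norm_of_isOrthProjOn {K : ℕ → Set X} {L : Set X} {Q : ℕ → X → X}
    {P : X → X} (hQ : ∀ n, IsOrthProjOn (K n) (Q n)) (hP : IsOrthProjOn L P) {x : X}
    (h : WeakTendsto (fun n => Q n x) (P x)) :
    Tendsto (fun n => ‖Q n x‖) atTop (𝓝 ‖P x‖) := by
  have h1 := h x
  simp only [(hQ _).inner_self, hP.inner_self] at h1
  have h2 := ((Complex.continuous_re.tendsto _).comp h1).sqrt
  simpa only [Function.comp_def, Complex.ofReal_re, Real.sqrt_sq (norm_nonneg _)] using h2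

/-- The Radon–Riesz property of Hilbert spaces. -/
theorem WeakTendsto.tendsto_of_tendsto_norm {u : ℕ → X} {a : X} (h : WeakTendsto u a)
    (hn : Tendsto (fun n => ‖u n‖) atTop (𝓝 ‖a‖)) : Tendsto u atTop (𝓝 a) := by
  rw [tendsto_iff_norm_sub_tendsto_zero]
  have h1 : Tendsto (fun n => ‖u n - a‖ ^ 2) atTop (𝓝 (‖a - a‖ ^ 2)) := by
    simp only [@norm_sub_sq ℂ]
    exact ((hn.pow 2).sub (((Complex.continuous_re.tendsto _).comp (h a)).const_mul 2)).add_const _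
  simpa using h1.sqrt

/-- By polarization, convergence of the quadratic forms of linear maps gives convergence in the
weak operator topology. -/
theorem weakTendsto_of_tendsto_inner_self {T : ℕ → X →ₗ[ℂ] X} {S : X →ₗ[ℂ] X}
    (h : ∀ x, Tendsto (fun n => ⟪T n x, x⟫_ℂ) atTop (𝓝 ⟪S x, x⟫_ℂ)) (x : X) :
    WeakTendsto (fun n => T n x) (S x) := by
  intro z
  rw [inner_map_polarization S z x]
  refine Tendsto.congr (fun n => (inner_map_polarization (T n) z x).symm) ?_
  exact ((((h _).sub (h _)).add ((h _).const_mul _)).sub ((h _).const_mul _)).div_const _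

/-- For closed subspaces `Xₙ` and `N` with orthogonal projections `Pₙ`
and `P`, the following are equivalent: (i) `Pₙ x → P x` in norm for every `x`;
(ii) `Pₙ x ⇀ P x` weakly for every `x`; (iii) `‖Pₙ x‖ → ‖P x‖` for every `x`. -/
theorem projections_strong_iff_weak_iff_norm_convergence
    (Xn : ℕ → Submodule ℂ X) (hXn : ∀ n, IsClosed ((Xn n : Set X)))
    (N : Submodule ℂ X) (hN : IsClosed ((N : Set X)))
    (Pn : ℕ → X → X) (hPn : ∀ n, IsOrthProjOn (Xn n : Set X) (Pn n))
    (P : X → X) (hP : IsOrthProjOn (N : Set X) P) :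
    ((∀ x : X, Tendsto (fun n => Pn n x) atTop (𝓝 (P x))) ↔
        ∀ x : X, WeakTendsto (fun n => Pn n x) (P x)) ∧
      ((∀ x : X, WeakTendsto (fun n => Pn n x) (P x)) ↔
        ∀ x : X, Tendsto (fun n => ‖Pn n x‖) atTop (𝓝 ‖P x‖)) := by
  refine ⟨⟨fun h x z => (h x).inner tendsto_const_nhds, fun h x =>
    (h x).tendsto_of_tendsto_norm ((h x).tendsto_norm_of_isOrthProjOn hPn hP)⟩,
    fun h x => (h x).tendsto_norm_of_isOrthProjOn hPn hP, fun h => ?_⟩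
  have hq : ∀ x, Tendsto (fun n => ⟪Pn n x, x⟫_ℂ) atTop (𝓝 ⟪P x, x⟫_ℂ) := fun x => by
    simp only [(hPn _).inner_self, hP.inner_self]
    exact (Complex.continuous_ofReal.tendsto _).comp ((h x).pow 2)
  choose T hT using fun n => (hPn n).exists_linearMap (hXn n)
  obtain ⟨S, rfl⟩ := hP.exists_linearMap hN
  obtain rfl : Pn = fun n => ⇑(T n) := funext hT
  exact weakTendsto_of_tendsto_inner_self hq
end
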